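/- arXiv:1802.05501 — 2 statements merged into one kernel-verified Lean document; each statement's English description precedes it below -/
import Mathlib

section
/- Let k be a positive integer, let G be a finite simple graph admitting a path decomposition in which every bag has size at most k, and let S and S' be bottlenecks of G with S' ⊄ S. Then there exists exactly one connected component H of G−S such that S' ⊆ S ∪ V(H). -/
/-!
Two counting facts about `S`-branches carry the proof. Distinct branches are disjoint, so a set
meeting every branch of a bottleneck has at least `2k+1` elements
(`IsBottleneck.le_ncard_of_inter`).

* A bottleneck `S` lies in a single bag, hence `|S| ≤ k` (`IsBottleneck.ncard_le`). Take `s ∈ S`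
  whose last bag index `b` is smallest. If some `t ∈ S` is missing from the bag `X b`, then `t`
  occurs only after `b`, while `s` occurs only up to `b`. Every `S`-branch is connected and has a
  neighbor of both, so it meets `X b`, which has at most `k` elements: a contradiction.
* Let `u ∈ S' \ S` lie in the component `H` of `G - S`, and suppose `v ∈ S'` is outside `S ∪ H`.
  An `S'`-branch together with `u` and `v` is connected, so it must meet `S`, as `S` separates `u`
  from `v`. Thus `S` meets all branches of `S'` and `|S| ≥ 2k+1`, contradicting `|S| ≤ k`.

Uniqueness holds because the component has to contain `u`.
-/

open SimpleGraph

variable {V : Type*}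

/-- `N_G(Y)`: the set of vertices outside `Y` having a neighbor in `Y`. -/
def nbhdSet (G : SimpleGraph V) (Y : Set V) : Set V :=
  {v | v ∉ Y ∧ ∃ u ∈ Y, G.Adj u v}

/-- `C` is a connected component of the subgraph of `G` induced by `U`. -/
def IsCompIn (G : SimpleGraph V) (U C : Set V) : Prop :=
  C.Nonempty ∧ C ⊆ U ∧ (G.induce C).Connected ∧
    ∀ u ∈ C, ∀ v ∈ U, G.Adj u v → v ∈ C

/-- `C` is a connected component of `G - S`. -/
def IsCompOf (G : SimpleGraph V) (S C : Set V) : Prop :=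
  IsCompIn G Sᶜ C

/-- `C` is an `S`-branch: a connected component of `G - S` with `N_G(C) = S`. -/
def IsBranch (G : SimpleGraph V) (S C : Set V) : Prop :=
  IsCompOf G S C ∧ nbhdSet G C = S

/-- `S` is a bottleneck (for the width parameter `k`): a nonempty set with
at least `2k+1` `S`-branches. -/
def IsBottleneck (G : SimpleGraph V) (k : ℕ) (S : Set V) : Prop :=
  S.Nonempty ∧ 2 * k + 1 ≤ {C : Set V | IsBranch G S C}.ncard

/-- `(X 0, …, X (l-1))` is a path decomposition of `G`. -/
def IsPathDecomp (G : SimpleGraph V) (l : ℕ) (X : ℕ → Set V) : Prop :=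
  (∀ v, ∃ i < l, v ∈ X i) ∧
  (∀ u v, G.Adj u v → ∃ i < l, u ∈ X i ∧ v ∈ X i) ∧
  (∀ i j m, i ≤ j → j ≤ m → m < l → X i ∩ X m ⊆ X j)

/-- The width of a path decomposition: the maximum bag size minus one. -/
noncomputable def pdWidth (l : ℕ) (X : ℕ → Set V) : ℕ :=
  ((Finset.range l).sup fun i => (X i).ncard) - 1

/-- The set of indices of bags meeting the vertex set `C`. -/
def supp (l : ℕ) (X : ℕ → Set V) (C : Set V) : Set ℕ :=
  {t | t < l ∧ (C ∩ X t).Nonempty}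

/-- `a(C)`: the first index of a bag meeting `C`. -/
noncomputable def firstIdx (l : ℕ) (X : ℕ → Set V) (C : Set V) : ℕ :=
  sInf (supp l X C)

/-- `b(C)`: the last index of a bag meeting `C`. -/
noncomputable def lastIdx (l : ℕ) (X : ℕ → Set V) (C : Set V) : ℕ :=
  sSup (supp l X C)

/-- `C` is an in-branch of `S` with respect to the decomposition:
an `S`-branch with `S ⊆ X (a C)` and `S ⊆ X (b C)`. -/
def IsInBranch (G : SimpleGraph V) (l : ℕ) (X : ℕ → Set V) (S C : Set V) : Prop :=
  IsBranch G S C ∧ S ⊆ X (firstIdx l X C) ∧ S ⊆ X (lastIdx l X C)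

/-- `α(S)`: the minimum of `a(H)` over in-branches `H` of `S`. -/
noncomputable def botStart (G : SimpleGraph V) (l : ℕ) (X : ℕ → Set V) (S : Set V) : ℕ :=
  sInf {i | ∃ C, IsInBranch G l X S C ∧ i = firstIdx l X C}

/-- `β(S)`: the maximum of `b(H)` over in-branches `H` of `S`. -/
noncomputable def botEnd (G : SimpleGraph V) (l : ℕ) (X : ℕ → Set V) (S : Set V) : ℕ :=
  sSup {i | ∃ C, IsInBranch G l X S C ∧ i = lastIdx l X C}

/-- The interval `I(S,P) = [α(S), β(S)]` of a bottleneck `S`. -/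
noncomputable def botInterval (G : SimpleGraph V) (l : ℕ) (X : ℕ → Set V) (S : Set V) : Set ℕ :=
  Set.Icc (botStart G l X S) (botEnd G l X S)

/-- A pre-branch of `S`. -/
def IsPreBranch (G : SimpleGraph V) (l : ℕ) (X : ℕ → Set V) (S C : Set V) : Prop :=
  IsBranch G S C ∧ ¬ IsInBranch G l X S C ∧ firstIdx l X C < botStart G l X S

/-- A post-branch of `S`. -/
def IsPostBranch (G : SimpleGraph V) (l : ℕ) (X : ℕ → Set V) (S C : Set V) : Prop :=
  IsBranch G S C ∧ ¬ IsInBranch G l X S C ∧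
    botStart G l X S ≤ firstIdx l X C ∧ botEnd G l X S < lastIdx l X C

/-- `C` waits in the interval `[i, j]` of the decomposition. -/
def WaitsIn (X : ℕ → Set V) (C : Set V) (i j : ℕ) : Prop :=
  ∀ t, i ≤ t → t ≤ j → C ∩ X t = C ∩ X i

/-- The decomposition is `S`-structured: every component of `G - S` that is not an
`S`-branch, and every pre- or post-branch of `S`, waits in `I(S,P)`. -/
def IsStructured (G : SimpleGraph V) (l : ℕ) (X : ℕ → Set V) (S : Set V) : Prop :=
  ∀ C : Set V,
    ((IsCompOf G S C ∧ ¬ IsBranch G S C) ∨ IsPreBranch G l X S C ∨ IsPostBranch G l X S C) →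
    WaitsIn X C (botStart G l X S) (botEnd G l X S)

/-- The decomposition is `I`-connected: every connected component of the subgraph
induced by any prefix of bags contains a vertex of `I`. -/
def IsIConn (G : SimpleGraph V) (l : ℕ) (X : ℕ → Set V) (I : Set V) : Prop :=
  ∀ i < l, ∀ C : Set V, IsCompIn G {v | ∃ j ≤ i, v ∈ X j} C → (C ∩ I).Nonempty

/-- A property that propagates along the edges inside a connected set `C` and holds at one vertex
of `C` holds on all of `C`. -/
theorem forall_mem_of_connected {G : SimpleGraph V} {C : Set V} (hC : (G.induce C).Connected)
    (p : V → Prop) (hp : ∀ x ∈ C, ∀ y ∈ C, G.Adj x y → p x → p y)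
    {x : V} (hx : x ∈ C) (hpx : p x) : ∀ y ∈ C, p y := by
  intro y hy
  obtain ⟨w⟩ := hC.preconnected ⟨x, hx⟩ ⟨y, hy⟩
  have key : ∀ (a b : C), (G.induce C).Walk a b → p a → p b := by
    intro a b w
    induction w with
    | nil => exact id
    | cons h _ ih => exact fun ha => ih (hp _ (Subtype.coe_prop _) _ (Subtype.coe_prop _) h ha)
  exact key _ _ w hpx

theorem IsCompOf.subset_of_mem {G : SimpleGraph V} {S C D : Set V} (hC : IsCompOf G S C)
    (hD : IsCompOf G S D) {x : V} (hxC : x ∈ C) (hxD : x ∈ D) : C ⊆ D :=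
  forall_mem_of_connected hC.2.2.1 (· ∈ D)
    (fun a _ b hb hab ha => hD.2.2.2 a ha b (hC.2.1 hb) hab) hxC hxD

theorem IsCompOf.eq_of_mem {G : SimpleGraph V} {S C D : Set V} (hC : IsCompOf G S C)
    (hD : IsCompOf G S D) {x : V} (hxC : x ∈ C) (hxD : x ∈ D) : C = D :=
  (hC.subset_of_mem hD hxC hxD).antisymm (hD.subset_of_mem hC hxD hxC)

theorem exists_isCompOf_mem (G : SimpleGraph V) {S : Set V} {u : V} (hu : u ∉ S) :
    ∃ H, IsCompOf G S H ∧ u ∈ H := by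
  -- The component is the union of all connected subsets of `Sᶜ` through `u`.
  let F : Set (Set V) := {T | T ⊆ Sᶜ ∧ u ∈ T ∧ (G.induce T).Connected}
  have huF : {u} ∈ F := by
    refine ⟨by simpa using hu, rfl, ?_⟩
    have : Nonempty ({u} : Set V) := ⟨⟨u, rfl⟩⟩
    exact ⟨Preconnected.of_subsingleton⟩
  have huH : u ∈ ⋃₀ F := ⟨_, huF, rfl⟩
  refine ⟨⋃₀ F, ⟨⟨u, huH⟩, Set.sUnion_subset fun T hT => hT.1, ?_, ?_⟩, huH⟩
  · exact induce_sUnion_connected_of_pairwise_not_disjoint ⟨_, huF⟩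
      (fun {s t} hs ht => ⟨u, hs.2.1, ht.2.1⟩) (fun {s} hs => hs.2.2)
  · rintro x ⟨T, hT, hxT⟩ y hy hxy
    refine ⟨T ∪ {y}, ⟨Set.union_subset hT.1 (by simpa using hy), Or.inl hT.2.1, ?_⟩, Or.inr rfl⟩
    exact connected_induce_union hT.2.2.preconnected Preconnected.of_subsingleton hxT rfl hxy

/-- Branches of a bottleneck are pairwise disjoint, so a set meeting all of them is large. -/
theorem IsBottleneck.le_ncard_of_inter [Finite V] {G : SimpleGraph V} {k : ℕ} {S T : Set V}
    (hS : IsBottleneck G k S) (hT : ∀ C, IsBranch G S C → (C ∩ T).Nonempty) :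
    2 * k + 1 ≤ T.ncard := by
  have : Nonempty V := ⟨hS.1.some⟩
  choose! f hf using hT
  refine hS.2.trans (Set.ncard_le_ncard_of_injOn f (fun C hC => (hf C hC).2) ?_ (Set.toFinite T))
  intro C hC D hD hCD
  exact hC.1.eq_of_mem hD.1 (hf C hC).1 (hCD ▸ (hf D hD).1)

/-- A connected set `C` with neighbors of `s` and of `t` meets the bag `X b`, provided `s` occurs
only in bags up to `b` and `t` only in bags after `b`. -/
theorem IsPathDecomp.inter_nonempty {G : SimpleGraph V} {l : ℕ} {X : ℕ → Set V}
    (hX : IsPathDecomp G l X) {C : Set V} (hC : (G.induce C).Connected) {b : ℕ} {s t x y : V}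
    (hs : ∀ i < l, s ∈ X i → i ≤ b) (ht : ∀ i < l, t ∈ X i → b < i)
    (hx : x ∈ C) (hy : y ∈ C) (hxs : G.Adj x s) (hyt : G.Adj y t) : (C ∩ X b).Nonempty := by
  by_contra hne
  have hb : ∀ z ∈ C, z ∉ X b := fun z hz hzb => hne ⟨z, hz, hzb⟩
  obtain ⟨-, hedge, hconv⟩ := hX
  -- A vertex of `C` lies entirely before or entirely after `b`, as its bags form an interval.
  have side : ∀ z ∈ C, ∀ i < l, z ∈ X i → i < b → ∀ j < l, z ∈ X j → j < b := by
    intro z hz i hi hzi hib j hj hzj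
    by_contra hjb
    exact hb z hz (hconv i b j hib.le (not_lt.1 hjb) hj ⟨hzi, hzj⟩)
  have hall : ∀ z ∈ C, ∀ j < l, z ∈ X j → j < b := by
    refine forall_mem_of_connected hC (fun z => ∀ j < l, z ∈ X j → j < b) ?_ hx ?_
    · intro z hz w hw hzw hpz
      obtain ⟨i, hi, hzi, hwi⟩ := hedge z w hzw
      exact side w hw i hi hwi (hpz i hi hzi)
    · obtain ⟨i, hi, hxi, hsi⟩ := hedge x s hxs
      refine side x hx i hi hxi (lt_of_le_of_ne (hs i hi hsi) ?_)
      rintro rfl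
      exact hb x hx hxi
  obtain ⟨i, hi, hyi, hti⟩ := hedge y t hyt
  exact absurd (hall y hy i hi hyi) (ht i hi hti).le.not_gt

/-- A bottleneck is contained in a bag, so it has at most `k` elements. -/
theorem IsBottleneck.ncard_le [Finite V] {G : SimpleGraph V} {k l : ℕ} {X : ℕ → Set V}
    (hX : IsPathDecomp G l X) (hk : ∀ i < l, (X i).ncard ≤ k) {S : Set V}
    (hS : IsBottleneck G k S) : S.ncard ≤ k := by
  have hlast : ∀ v, ∃ b < l, v ∈ X b ∧ ∀ i < l, v ∈ X i → i ≤ b := by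
    intro v
    have hfin : {i | i < l ∧ v ∈ X i}.Finite := (Set.finite_lt_nat l).subset fun i hi => hi.1
    obtain ⟨i, hi, hvi⟩ := hX.1 v
    obtain ⟨b, hb, hmax⟩ := Set.exists_max_image _ id hfin ⟨i, hi, hvi⟩
    exact ⟨b, hb.1, hb.2, fun j hj hvj => hmax j ⟨hj, hvj⟩⟩
  choose b hbl hbX hbmax using hlast
  obtain ⟨s, hs, hmin⟩ := Set.exists_min_image S b (Set.toFinite S) hS.1
  have hsub : S ⊆ X (b s) := by
    intro t ht
    by_contra htb
    have hafter : ∀ i < l, t ∈ X i → b s < i := by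
      intro i _ hti
      by_contra hle
      exact htb (hX.2.2 i (b s) (b t) (not_lt.1 hle) (hmin t ht) (hbl t) ⟨hti, hbX t⟩)
    have hcard : 2 * k + 1 ≤ (X (b s)).ncard := by
      refine hS.le_ncard_of_inter fun C hC => ?_
      have hs' := hs
      rw [← hC.2] at hs' ht
      obtain ⟨-, x, hx, hxs⟩ := hs'
      obtain ⟨-, y, hy, hyt⟩ := ht
      exact hX.inter_nonempty hC.1.2.2.1 (hbmax s) hafter hx hy hxs hyt
    have := hk _ (hbl s)
    omega
  exact (Set.ncard_le_ncard hsub (Set.toFinite _)).trans (hk _ (hbl s))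

/-- for bottlenecks `S, S'` with `S' ⊄ S` (in a graph admitting a path
decomposition with bags of size at most `k`), there is exactly one connected
component `H` of `G - S` with `S' ⊆ S ∪ H`. -/
theorem stmt6 [Fintype V] (k : ℕ) (hk : 1 ≤ k) (G : SimpleGraph V)
    (hdec : ∃ (l : ℕ) (X : ℕ → Set V),
      IsPathDecomp G l X ∧ ∀ i < l, (X i).ncard ≤ k)
    (S S' : Set V) (hS : IsBottleneck G k S) (hS' : IsBottleneck G k S')
    (hns : ¬ S' ⊆ S) :
    ∃! H : Set V, IsCompOf G S H ∧ S' ⊆ S ∪ H := by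
  obtain ⟨l, X, hX, hXk⟩ := hdec
  have hSk : S.ncard ≤ k := hS.ncard_le hX hXk
  obtain ⟨u, huS', huS⟩ := Set.not_subset.1 hns
  obtain ⟨H, hH, huH⟩ := exists_isCompOf_mem G huS
  refine ⟨H, ⟨hH, ?_⟩, ?_⟩
  · intro v hv
    by_contra hvSH
    obtain ⟨hvS, hvH⟩ := not_or.1 hvSH
    have hcard : 2 * k + 1 ≤ S.ncard := by
      refine hS'.le_ncard_of_inter fun C hC => ?_
      by_contra hne
      have hCS : ∀ z ∈ C, z ∈ Sᶜ := fun z hz hzS => hne ⟨z, hz, hzS⟩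
      rw [← hC.2] at huS' hv
      obtain ⟨-, x, hx, hxu⟩ := huS'
      obtain ⟨-, y, hy, hyv⟩ := hv
      have hyH : y ∈ H := forall_mem_of_connected hC.1.2.2.1 (· ∈ H)
        (fun a _ b hb hab ha => hH.2.2.2 a ha b (hCS b hb) hab) hx
        (hH.2.2.2 u huH x (hCS x hx) hxu.symm) y hy
      exact hvH (hH.2.2.2 y hyH v hvS hyv)
    omega
  · rintro H' ⟨hH', hsub⟩
    exact hH'.eq_of_mem hH ((hsub huS').resolve_left huS) huH
end

section
/- Let k be a positive integer, let G be a finite simple graph, and let I ⊆ V(G). If there exists an I-connected path decomposition P of G of width at most k−1, then there exists an I-connected path decomposition P' of G of width at most width(P) such that P' is S-structured for every bottleneck S of G. -/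
/-!
A path decomposition is encoded by giving each vertex `v` a half-open time interval
`[a v, b v)` (`Layout`). Introducing vertices one at a time, in each bag by distance to `I`
inside the prefix, the starting times become distinct, and `I`-connectedness turns into the local
condition that every vertex outside `I` has a neighbour starting earlier (`exists_layout`).

For a bottleneck `S` let `H` be the union of its in-branches. At most `2k` branches are not
in-branches, because each of them meets one of two fixed bags; so `H` is nonempty
(`exists_inB`), and `S` is present whenever `H` is. Choose a time `t` while `H` is being processed
at which the bag has the fewest vertices outside `H`. Halting everything outside `H` at time `t` and
performing all of `H` at that moment (`gather`) gives a layout of no larger width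
(`gather_layout`) which is `S`-structured (`str_gather_self`). Connectedness survives because
every vertex of `S` starts before `H` does.

To treat all bottlenecks at once, take a layout minimizing lexicographically the sum over all
vertices of the size of the bag in which the vertex starts, and then the number of bottlenecks for
which it is not structured. Gathering does not increase the sum; minimality forces that every
starting time of a vertex of `H` is an admissible choice of `t`. With such a `t`, gathering for `S`
keeps structuredness for every other bottleneck `S'` (`str_gather_other`), so a
non-structured `S` would contradict minimality. The last point rests on `bottleneck_side`:
of two bottlenecks, each lies, apart from common vertices, in a single component of the complement
of the other, together with all its branches avoiding the other.
-/

open SimpleGraph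

variable {V : Type*}

/-! ### Connected sets and components -/

lemma conn_closed {G : SimpleGraph V} {C : Set V} (hC : (G.induce C).Connected) (P : V → Prop)
    {x : V} (hx : x ∈ C) (hPx : P x)
    (hstep : ∀ u ∈ C, ∀ v ∈ C, G.Adj u v → P u → P v) : ∀ y ∈ C, P y := by
  intro y hy
  obtain ⟨p⟩ := hC.preconnected ⟨x, hx⟩ ⟨y, hy⟩
  have key : ∀ (u v : C), (G.induce C).Walk u v → P u → P v := by
    intro u v p
    induction p with
    | nil => exact id
    | @cons u v w h q ih => exact fun hu => ih (hstep u u.2 v v.2 h hu)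
  exact key _ _ p hPx

lemma subset_comp {G : SimpleGraph V} {U C K : Set V} (hC : IsCompIn G U C)
    (hK : (G.induce K).Connected) (hKU : K ⊆ U) {x : V} (hxK : x ∈ K) (hxC : x ∈ C) : K ⊆ C :=
  conn_closed hK (· ∈ C) hxK hxC fun u _ v hv h hu => hC.2.2.2 u hu v (hKU hv) h

lemma comp_eq {G : SimpleGraph V} {U C D : Set V} (hC : IsCompIn G U C) (hD : IsCompIn G U D)
    {x : V} (hxC : x ∈ C) (hxD : x ∈ D) : C = D :=
  (subset_comp hD hC.2.2.1 hC.2.1 hxC hxD).antisymm (subset_comp hC hD.2.2.1 hD.2.1 hxD hxC)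

/-- The vertices reachable from `v` by walks inside `U` form a component of `G[U]`. -/
lemma isCompIn_walks (G : SimpleGraph V) (U : Set V) {v : V} (hv : v ∈ U) :
    IsCompIn G U {u | ∃ p : G.Walk v u, ∀ x ∈ p.support, x ∈ U} := by
  classical
  have hvC : v ∈ {u | ∃ p : G.Walk v u, ∀ x ∈ p.support, x ∈ U} :=
    ⟨Walk.nil, by simpa using hv⟩
  refine ⟨⟨v, hvC⟩, ?_, ?_, ?_⟩
  · rintro u ⟨p, hp⟩
    exact hp u p.end_mem_support
  · refine induce_connected_of_patches v hvC ?_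
    rintro u ⟨p, hp⟩
    refine ⟨{x | x ∈ p.support}, ?_, p.start_mem_support, p.end_mem_support,
      p.connected_induce_support.preconnected _ _⟩
    intro x hx
    exact ⟨p.takeUntil x hx, fun y hy => hp y (p.support_takeUntil_subset_support hx hy)⟩
  · rintro u ⟨p, hp⟩ x hx h
    refine ⟨p.concat h, ?_⟩
    intro y hy
    rw [Walk.support_concat] at hy
    simp only [List.mem_append, List.mem_singleton] at hy
    rcases hy with hy | rfl
    · exact hp y hy
    · exact hx

lemma exists_compIn (G : SimpleGraph V) (U : Set V) {v : V} (hv : v ∈ U) :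
    ∃ C, IsCompIn G U C ∧ v ∈ C :=
  ⟨_, isCompIn_walks G U hv, Walk.nil, by simpa using hv⟩

lemma IsBranch.exists_adj {G : SimpleGraph V} {S C : Set V} (h : IsBranch G S C) {s : V}
    (hs : s ∈ S) : ∃ u ∈ C, G.Adj u s := by
  rw [← h.2] at hs
  exact hs.2

lemma IsBranch.not_mem {G : SimpleGraph V} {S C : Set V} (h : IsBranch G S C) {v : V}
    (hv : v ∈ C) : v ∉ S := h.1.2.1 hv

/-- Branches are pairwise disjoint, so at most `|T|` of them meet a set `T`. -/
lemma ncard_branches_meeting [Finite V] (G : SimpleGraph V) (S T : Set V) :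
    {C : Set V | IsBranch G S C ∧ (C ∩ T).Nonempty}.ncard ≤ T.ncard := by
  classical
  rcases isEmpty_or_nonempty V with hV | ⟨⟨v₀⟩⟩
  · rw [show {C : Set V | IsBranch G S C ∧ (C ∩ T).Nonempty} = ∅ from ?_]
    · simp
    · refine Set.eq_empty_of_forall_notMem ?_
      rintro C ⟨-, x, -⟩
      exact hV.elim x
  have hch : ∀ C : Set V, ∃ x : V,
      C ∈ {C : Set V | IsBranch G S C ∧ (C ∩ T).Nonempty} → x ∈ C ∩ T := by
    intro C
    by_cases h : (C ∩ T).Nonempty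
    · exact ⟨h.some, fun _ => h.some_mem⟩
    · exact ⟨v₀, fun h' => absurd h'.2 h⟩
  choose f hf using hch
  refine Set.ncard_le_ncard_of_injOn f (fun C hC => (hf C hC).2) ?_ (Set.toFinite _)
  intro C hC D hD hCD
  have h1 := (hf C hC).1
  have h2 := (hf D hD).1
  rw [← hCD] at h2
  exact comp_eq hC.1.1 hD.1.1 h1 h2

/-- A bottleneck `S` keeps the part of it lying outside a small set `T` in a single component
of `G - T`, together with all branches that avoid `T`. -/
lemma bottleneck_side [Finite V] {G : SimpleGraph V} {k : ℕ} {S T : Set V}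
    (hS : IsBottleneck G k S) (hT : T.ncard ≤ k) (hST : ¬ S ⊆ T) :
    ∃ D, IsCompOf G T D ∧ (∀ s ∈ S, s ∉ T → s ∈ D) ∧
      ∀ C, IsBranch G S C → (∀ x ∈ C, x ∉ T) → C ⊆ D := by
  obtain ⟨C0, hC0, hC0T⟩ : ∃ C, IsBranch G S C ∧ ∀ x ∈ C, x ∉ T := by
    by_contra! hcon
    have h1 := ncard_branches_meeting G S T
    have h2 : {C : Set V | IsBranch G S C} ⊆
        {C : Set V | IsBranch G S C ∧ (C ∩ T).Nonempty} := fun C hC => ⟨hC, hcon C hC⟩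
    have h3 := Set.ncard_le_ncard h2 (Set.toFinite _)
    have h4 := hS.2
    omega
  obtain ⟨x, hx⟩ := hC0.1.1
  obtain ⟨D, hD, hxD⟩ := exists_compIn G Tᶜ (hC0T x hx)
  have hsub : C0 ⊆ D := subset_comp hD hC0.1.2.2.1 (fun y hy => hC0T y hy) hx hxD
  have hSD : ∀ s ∈ S, s ∉ T → s ∈ D := by
    intro s hs hsT
    obtain ⟨u, hu, hus⟩ := hC0.exists_adj hs
    exact hD.2.2.2 u (hsub hu) s hsT hus
  refine ⟨D, hD, hSD, ?_⟩
  intro C hC hCT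
  obtain ⟨s, hs, hsT⟩ := Set.not_subset.1 hST
  obtain ⟨u, hu, hus⟩ := hC.exists_adj hs
  exact subset_comp hD hC.1.2.2.1 (fun y hy => hCT y hy) hu
    (hD.2.2.2 s (hSD s hs hsT) u (hCT u hu) hus.symm)

/-! ### Timed vertex layouts -/

/-- The bag at time `t` when each vertex `v` is present during the half-open interval
`[a v, b v)`. -/
def bag (a b : V → ℕ) (t : ℕ) : Set V := {v | a v ≤ t ∧ t < b v}

/-- The intervals `[a v, b v)` encode an `I`-connected path decomposition of `G` with bags of
size at most `w` in which vertices appear one at a time. Since the starting times are distinct,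
`I`-connectedness amounts to the local condition `conn`. -/
structure Layout (G : SimpleGraph V) (I : Set V) (w : ℕ) (a b : V → ℕ) : Prop where
  inj : Function.Injective a
  lt : ∀ v, a v < b v
  adj : ∀ u v, G.Adj u v → a u < b v
  conn : ∀ v, v ∉ I → ∃ u, G.Adj v u ∧ a u < a v
  width : ∀ t, (bag a b t).ncard ≤ w

/-- In-branches of `S` in terms of vertex intervals: the interval of every vertex of the branch
lies inside the interval of every vertex of `S`. -/
def InB (G : SimpleGraph V) (a b : V → ℕ) (S C : Set V) : Prop :=
  IsBranch G S C ∧ ∀ v ∈ C, ∀ s ∈ S, a s ≤ a v ∧ b v ≤ b s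

/-- The union of all in-branches of `S`. -/
def inUnion (G : SimpleGraph V) (a b : V → ℕ) (S : Set V) : Set V :=
  {v | ∃ C, InB G a b S C ∧ v ∈ C}

/-- `S`-structuredness in terms of vertex intervals: no vertex outside `S` and outside the
in-branches of `S` starts or ends strictly between the first start and the last end of an
in-branch vertex. -/
def Str (G : SimpleGraph V) (a b : V → ℕ) (S : Set V) : Prop :=
  ∀ v, v ∉ S → v ∉ inUnion G a b S → ∀ h₁ ∈ inUnion G a b S, ∀ h₂ ∈ inUnion G a b S,
    ¬ (a h₁ < a v ∧ a v < b h₂) ∧ ¬ (a h₁ < b v ∧ b v < b h₂)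

lemma mem_bag {a b : V → ℕ} {t : ℕ} {v : V} : v ∈ bag a b t ↔ a v ≤ t ∧ t < b v := Iff.rfl

/-- A connected set with a vertex starting at or before `t` and a vertex ending after `t`
meets the bag at time `t`. -/
lemma meets_bag {G : SimpleGraph V} {I : Set V} {w : ℕ} {a b : V → ℕ} (hL : Layout G I w a b)
    {C : Set V} (hC : (G.induce C).Connected) {t : ℕ} {u v : V} (hu : u ∈ C) (hut : a u ≤ t)
    (hv : v ∈ C) (hvt : t < b v) : (C ∩ bag a b t).Nonempty := by
  by_contra hcon
  have hno : ∀ x ∈ C, ¬ (a x ≤ t ∧ t < b x) := fun x hx h => hcon ⟨x, hx, h⟩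
  have := conn_closed hC (fun x => a x ≤ t) hu hut (by
    intro x hx y hy hxy hxt
    have h1 := hno x hx
    have h2 := hL.adj y x hxy.symm
    omega) v hv
  exact hno v hv ⟨this, hvt⟩

/-- A branch that is not an in-branch meets the bag in which the last vertex of `S` appears or the
last bag before the first vertex of `S` disappears; hence at most `2k` branches are not
in-branches. -/
lemma exists_inB [Finite V] {G : SimpleGraph V} {I S : Set V} {w k : ℕ} {a b : V → ℕ}
    (hL : Layout G I w a b) (hwk : w ≤ k) (hS : IsBottleneck G k S) : ∃ C, InB G a b S C := by
  by_contra! hcon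
  obtain ⟨s₀, hs₀, hmax⟩ := Set.exists_max_image S a (Set.toFinite _) hS.1
  obtain ⟨s₁, hs₁, hmin⟩ := Set.exists_min_image S b (Set.toFinite _) hS.1
  have hsub : {C : Set V | IsBranch G S C} ⊆
      {C : Set V | IsBranch G S C ∧ (C ∩ bag a b (a s₀)).Nonempty} ∪
      {C : Set V | IsBranch G S C ∧ (C ∩ bag a b (b s₁ - 1)).Nonempty} := by
    intro C hC
    have hC' : IsBranch G S C := hC
    have hn : ¬ ∀ v ∈ C, ∀ s ∈ S, a s ≤ a v ∧ b v ≤ b s := fun h => hcon C ⟨hC, h⟩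
    push Not at hn
    obtain ⟨v, hv, s, hs, hvs⟩ := hn
    by_cases h : a s ≤ a v
    · right
      refine ⟨hC, ?_⟩
      obtain ⟨u, hu, hadj⟩ := hC'.exists_adj hs₁
      have h1 := hL.adj u s₁ hadj
      have h2 := hvs h
      have h3 := hmin s hs
      exact meets_bag hL hC'.1.2.2.1 hu (by omega) hv (by omega)
    · left
      refine ⟨hC, ?_⟩
      obtain ⟨u, hu, hadj⟩ := hC'.exists_adj hs₀
      have h1 := hL.adj s₀ u hadj.symm
      have h3 := hmax s hs
      exact meets_bag hL hC'.1.2.2.1 hv (by omega) hu h1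
  have h1 := Set.ncard_le_ncard hsub (Set.toFinite _)
  have h2 := Set.ncard_union_le
    {C : Set V | IsBranch G S C ∧ (C ∩ bag a b (a s₀)).Nonempty}
    {C : Set V | IsBranch G S C ∧ (C ∩ bag a b (b s₁ - 1)).Nonempty}
  have h3 := ncard_branches_meeting G S (bag a b (a s₀))
  have h4 := ncard_branches_meeting G S (bag a b (b s₁ - 1))
  have h5 := hL.width (a s₀)
  have h6 := hL.width (b s₁ - 1)
  have h7 := hS.2
  omega

lemma inUnion_nonempty [Finite V] {G : SimpleGraph V} {I S : Set V} {w k : ℕ} {a b : V → ℕ}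
    (hL : Layout G I w a b) (hwk : w ≤ k) (hS : IsBottleneck G k S) :
    (inUnion G a b S).Nonempty := by
  obtain ⟨C, hC⟩ := exists_inB hL hwk hS
  obtain ⟨x, hx⟩ := hC.1.1.1
  exact ⟨x, C, hC, hx⟩

lemma inUnion_bounds {G : SimpleGraph V} {a b : V → ℕ} {S : Set V} {h s : V}
    (hh : h ∈ inUnion G a b S) (hs : s ∈ S) : a s ≤ a h ∧ b h ≤ b s := by
  obtain ⟨C, hC, hhC⟩ := hh
  exact hC.2 h hhC s hs

lemma inUnion_not_mem {G : SimpleGraph V} {a b : V → ℕ} {S : Set V} {h : V}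
    (hh : h ∈ inUnion G a b S) : h ∉ S := by
  obtain ⟨C, hC, hhC⟩ := hh
  exact hC.1.not_mem hhC

lemma inUnion_adj {G : SimpleGraph V} {a b : V → ℕ} {S : Set V} {h u : V}
    (hh : h ∈ inUnion G a b S) (hu : G.Adj h u) : u ∈ inUnion G a b S ∨ u ∈ S := by
  obtain ⟨C, hC, hhC⟩ := hh
  by_cases huS : u ∈ S
  · exact Or.inr huS
  · exact Or.inl ⟨C, hC, hC.1.1.2.2.2 h hhC u huS hu⟩

lemma inUnion_of_comp {G : SimpleGraph V} {a b : V → ℕ} {S C : Set V} {v : V}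
    (hv : v ∈ inUnion G a b S) (hC : IsCompOf G S C) (hvC : v ∈ C) : InB G a b S C := by
  obtain ⟨D, hD, hvD⟩ := hv
  rwa [comp_eq hC hD.1.1 hvC hvD]

lemma bottleneck_ncard_le [Finite V] {G : SimpleGraph V} {I S : Set V} {w k : ℕ} {a b : V → ℕ}
    (hL : Layout G I w a b) (hwk : w ≤ k) (hS : IsBottleneck G k S) : S.ncard ≤ k := by
  obtain ⟨h, hh⟩ := inUnion_nonempty hL hwk hS
  have hsub : S ⊆ bag a b (a h) := by
    intro s hs
    have h1 := inUnion_bounds hh hs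
    have h2 := hL.lt h
    exact ⟨h1.1, by omega⟩
  exact ((Set.ncard_le_ncard hsub (Set.toFinite _)).trans (hL.width _)).trans hwk

/-! ### Gathering the in-branches at one moment -/

open Classical in
/-- Reschedules an event function so that all events of vertices of `H` happen, in their old order,
in the window `[N, 2N)`, while all other vertices are halted at time `t`: their events up
to `t` come before the window and their later events after it. Here `N` exceeds all event times. -/
noncomputable def gather (H : Set V) (t N : ℕ) (x : V → ℕ) (v : V) : ℕ :=
  if v ∈ H then x v + N else if x v ≤ t then x v else x v + 2 * N

section gather
variable {H : Set V} {t N : ℕ} {x y : V → ℕ} {u v : V}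

lemma gather_in (hv : v ∈ H) : gather H t N x v = x v + N := by simp [gather, hv]

lemma gather_out (hv : v ∉ H) :
    gather H t N x v = if x v ≤ t then x v else x v + 2 * N := by simp [gather, hv]

lemma gather_lt_in (hu : u ∈ H) (hv : v ∈ H) :
    gather H t N x u < gather H t N y v ↔ x u < y v := by
  rw [gather_in hu, gather_in hv]; omega

lemma gather_lt_out (hu : u ∉ H) (hv : v ∉ H) :
    gather H t N x u < gather H t N y v ↔ x u < y v := by
  rw [gather_out hu, gather_out hv]; split_ifs <;> omega

lemma gather_le_in (hu : u ∈ H) (hv : v ∈ H) :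
    gather H t N x u ≤ gather H t N y v ↔ x u ≤ y v := by
  rw [← not_lt, gather_lt_in hv hu, not_lt]

lemma gather_le_out (hu : u ∉ H) (hv : v ∉ H) :
    gather H t N x u ≤ gather H t N y v ↔ x u ≤ y v := by
  rw [← not_lt, gather_lt_out hv hu, not_lt]

lemma gather_before (hu : u ∉ H) (hv : v ∈ H) (h : x u ≤ t) (htN : t < N) :
    gather H t N x u < gather H t N y v := by
  rw [gather_out hu, gather_in hv, if_pos h]; omega

lemma gather_after (hu : u ∉ H) (hv : v ∈ H) (h : t < x u) (hN : y v < N) :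
    gather H t N y v < gather H t N x u := by
  rw [gather_out hu, gather_in hv, if_neg (by omega)]; omega

end gather

section gatherLayout
variable {G : SimpleGraph V} {I S : Set V} {w : ℕ} {a b : V → ℕ} {t N : ℕ}

/-- `t` is a time during which the in-branches of `S` are being processed. -/
def Within (G : SimpleGraph V) (a b : V → ℕ) (S : Set V) (t : ℕ) : Prop :=
  ∃ h₁ ∈ inUnion G a b S, ∃ h₂ ∈ inUnion G a b S, a h₁ ≤ t ∧ t < b h₂

lemma Within.lt_bound (ht : Within G a b S t) (hN : ∀ v, b v < N) : t < N := by
  obtain ⟨h₁, -, h₂, -, -, h⟩ := ht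
  exact h.trans (hN h₂)

lemma Within.bounds (ht : Within G a b S t) {s : V} (hs : s ∈ S) : a s ≤ t ∧ t < b s := by
  obtain ⟨h₁, hh₁, h₂, hh₂, h, h'⟩ := ht
  have := inUnion_bounds hh₁ hs
  have := inUnion_bounds hh₂ hs
  omega

variable [Finite V]

/-- A bag during the window consists of the halted part of the bag at time `t` and of the old
in-branch part. -/
lemma ncard_gather_window (hL : Layout G I w a b) (ht : Within G a b S t) (hN : ∀ v, b v < N)
    {e : ℕ} (he : e < N) :
    (bag (gather (inUnion G a b S) t N a) (gather (inUnion G a b S) t N b) (e + N)).ncard ≤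
      (bag a b t \ inUnion G a b S).ncard + (bag a b e ∩ inUnion G a b S).ncard := by
  have htN := ht.lt_bound hN
  refine (Set.ncard_le_ncard (t := (bag a b t \ inUnion G a b S) ∪
    (bag a b e ∩ inUnion G a b S)) ?_ (Set.toFinite _)).trans (Set.ncard_union_le _ _)
  rintro v ⟨h1, h2⟩
  have := hN v
  have := hL.lt v
  by_cases hv : v ∈ inUnion G a b S
  · rw [gather_in hv] at h1 h2
    exact Or.inr ⟨⟨by omega, by omega⟩, hv⟩
  · rw [gather_out hv] at h1 h2
    refine Or.inl ⟨?_, hv⟩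
    split_ifs at h1 h2 <;> refine ⟨?_, ?_⟩ <;> omega

lemma ncard_split (A H : Set V) : (A \ H).ncard + (A ∩ H).ncard = A.ncard := by
  rw [add_comm]; exact Set.ncard_inter_add_ncard_sdiff_eq_ncard A H (Set.toFinite _)

lemma gather_layout (hL : Layout G I w a b) (ht : Within G a b S t) (hN : ∀ v, b v < N)
    (hmin : ∀ τ, Within G a b S τ →
      (bag a b t \ inUnion G a b S).ncard ≤ (bag a b τ \ inUnion G a b S).ncard) :
    Layout G I w (gather (inUnion G a b S) t N a) (gather (inUnion G a b S) t N b) := by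
  have htN := ht.lt_bound hN
  have haN : ∀ v, a v < N := fun v => (hL.lt v).trans (hN v)
  set H := inUnion G a b S with hH
  refine ⟨?_, ?_, ?_, ?_, ?_⟩
  · intro u v huv
    apply hL.inj
    have := haN u
    have := haN v
    by_cases hu : u ∈ H <;> by_cases hv : v ∈ H
    · rw [gather_in hu, gather_in hv] at huv; omega
    · rw [gather_in hu, gather_out hv] at huv; split_ifs at huv <;> omega
    · rw [gather_out hu, gather_in hv] at huv; split_ifs at huv <;> omega
    · rw [gather_out hu, gather_out hv] at huv; split_ifs at huv <;> omega
  · intro v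
    by_cases hv : v ∈ H
    · exact (gather_lt_in hv hv).2 (hL.lt v)
    · exact (gather_lt_out hv hv).2 (hL.lt v)
  · intro u v huv
    by_cases hu : u ∈ H <;> by_cases hv : v ∈ H
    · exact (gather_lt_in hu hv).2 (hL.adj u v huv)
    · have hvS := (inUnion_adj hu huv).resolve_left hv
      exact gather_after hv hu (ht.bounds hvS).2 (haN u)
    · have huS := (inUnion_adj hv huv.symm).resolve_left hu
      exact gather_before hu hv (ht.bounds huS).1 htN
    · exact (gather_lt_out hu hv).2 (hL.adj u v huv)
  · intro v hvI
    obtain ⟨u, huv, hlt⟩ := hL.conn v hvI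
    refine ⟨u, huv, ?_⟩
    by_cases hu : u ∈ H <;> by_cases hv : v ∈ H
    · exact (gather_lt_in hu hv).2 hlt
    · have hvS := (inUnion_adj hu huv.symm).resolve_left hv
      have := inUnion_bounds hu hvS
      omega
    · have huS := (inUnion_adj hv huv).resolve_left hu
      exact gather_before hu hv (ht.bounds huS).1 htN
    · exact (gather_lt_out hu hv).2 hlt
  · intro τ
    by_cases hτ : ∃ h ∈ H, h ∈ bag (gather H t N a) (gather H t N b) τ
    · obtain ⟨h, hh, h1, h2⟩ := hτ
      rw [gather_in hh] at h1 h2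
      have hbN := hN h
      obtain ⟨e, rfl⟩ : ∃ e, τ = e + N := ⟨τ - N, by omega⟩
      have h3 := ncard_gather_window hL ht hN (e := e) (by omega)
      have h4 := hmin e ⟨h, hh, h, hh, by omega, by omega⟩
      have h5 := ncard_split (bag a b e) H
      have h6 := hL.width e
      rw [← hH] at h3
      omega
    · have hsub : bag (gather H t N a) (gather H t N b) τ ⊆
          bag a b (if τ ≤ t then τ else if τ ≤ 2 * N + t then t else τ - 2 * N) := by
        intro v hv
        have hvH : v ∉ H := fun h => hτ ⟨v, h, hv⟩
        obtain ⟨h1, h2⟩ := hv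
        rw [gather_out hvH] at h1 h2
        have := hL.lt v
        have := hN v
        rw [mem_bag]
        split_ifs at h1 h2 ⊢ <;> omega
      exact (Set.ncard_le_ncard hsub (Set.toFinite _)).trans (hL.width _)

/-- Outside the in-branches, gathering never increases the size of the bag at which a vertex
starts. -/
lemma ncard_gather_start_out (hL : Layout G I w a b) (ht : Within G a b S t)
    (hN : ∀ v, b v < N) {v : V} (hv : v ∉ inUnion G a b S) :
    (bag (gather (inUnion G a b S) t N a) (gather (inUnion G a b S) t N b)
      (gather (inUnion G a b S) t N a v)).ncard ≤ (bag a b (a v)).ncard := by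
  have htN := ht.lt_bound hN
  have hvN := (hL.lt v).trans (hN v)
  refine Set.ncard_le_ncard ?_ (Set.toFinite _)
  intro u hu
  have := hN u
  have := hL.lt u
  by_cases huH : u ∈ inUnion G a b S
  · obtain ⟨h1, h2⟩ := hu
    rw [gather_in huH, gather_out hv] at h1 h2
    split_ifs at h1 h2 <;> omega
  · exact ⟨(gather_le_out huH hv).1 hu.1, (gather_lt_out hv huH).1 hu.2⟩

lemma ncard_gather_start_in (hL : Layout G I w a b) (ht : Within G a b S t)
    (hN : ∀ v, b v < N) {v : V} (hv : v ∈ inUnion G a b S) :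
    (bag (gather (inUnion G a b S) t N a) (gather (inUnion G a b S) t N b)
      (gather (inUnion G a b S) t N a v)).ncard ≤
      (bag a b t \ inUnion G a b S).ncard + (bag a b (a v) ∩ inUnion G a b S).ncard := by
  rw [gather_in hv]
  exact ncard_gather_window hL ht hN ((hL.lt v).trans (hN v))

end gatherLayout

/-! ### Gathering and structuredness -/

section gatherStr
variable {G : SimpleGraph V} {I S S' : Set V} {w k : ℕ} {a b : V → ℕ} {t N : ℕ}

lemma inUnion_congr {a' b' : V → ℕ} (h : ∀ C, InB G a' b' S C ↔ InB G a b S C) :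
    inUnion G a' b' S = inUnion G a b S := by
  ext v; simp only [inUnion, h]

lemma inB_gather_self (ht : Within G a b S t) (hN : ∀ v, b v < N)
    (C : Set V) :
    InB G (gather (inUnion G a b S) t N a) (gather (inUnion G a b S) t N b) S C ↔
      InB G a b S C := by
  have hSH : ∀ s ∈ S, s ∉ inUnion G a b S := fun s hs h => inUnion_not_mem h hs
  constructor
  · rintro ⟨hB, hC⟩
    by_cases hm : ∃ x ∈ C, x ∈ inUnion G a b S
    · obtain ⟨x, hxC, hx⟩ := hm
      exact inUnion_of_comp hx hB.1 hxC
    · push Not at hm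
      refine ⟨hB, fun v hv s hs => ?_⟩
      have := hC v hv s hs
      rwa [gather_le_out (hSH s hs) (hm v hv), gather_le_out (hm v hv) (hSH s hs)] at this
  · intro hC
    refine ⟨hC.1, fun v hv s hs => ?_⟩
    have hvH : v ∈ inUnion G a b S := ⟨C, hC, hv⟩
    exact ⟨(gather_before (hSH s hs) hvH (ht.bounds hs).1 (ht.lt_bound hN)).le,
      (gather_after (hSH s hs) hvH (ht.bounds hs).2 (hN v)).le⟩

/-- No event of a vertex outside `H` falls into the window occupied by `H`. -/
lemma gather_not_between {H : Set V} {x : V → ℕ} {v h₁ h₂ : V} (hN : ∀ v, b v < N)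
    (htN : t < N) (hv : v ∉ H) (h₁H : h₁ ∈ H) (h₂H : h₂ ∈ H) :
    ¬ (gather H t N a h₁ < gather H t N x v ∧ gather H t N x v < gather H t N b h₂) := by
  rintro ⟨h1, h2⟩
  by_cases h : x v ≤ t
  · exact absurd (gather_before (y := a) hv h₁H h htN) (by omega)
  · exact absurd (gather_after hv h₂H (not_le.1 h) (hN h₂)) (by omega)

lemma str_gather_self (ht : Within G a b S t) (hN : ∀ v, b v < N) :
    Str G (gather (inUnion G a b S) t N a) (gather (inUnion G a b S) t N b) S := by
  unfold Str
  rw [inUnion_congr (inB_gather_self ht hN)]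
  intro v hvS hv h₁ hh₁ h₂ hh₂
  exact ⟨gather_not_between hN (ht.lt_bound hN) hv hh₁ hh₂,
    gather_not_between hN (ht.lt_bound hN) hv hh₁ hh₂⟩

/-- Gathering the in-branches of `S` keeps `S'`-structuredness if `S'` meets an in-branch `D`
of `S`: then all in-branches of `S'` lie in `D` and move along with it. -/
lemma str_gather_of_meets [Finite V] (hL : Layout G I w a b) (ht : Within G a b S t)
    (hN : ∀ v, b v < N) (hSk : S.ncard ≤ k) (hS' : IsBottleneck G k S') {x : V} (hxS' : x ∈ S')
    (hxH : x ∈ inUnion G a b S) (hStr : Str G a b S') :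
    Str G (gather (inUnion G a b S) t N a) (gather (inUnion G a b S) t N b) S' := by
  have htN := ht.lt_bound hN
  have hSH : ∀ s ∈ S, s ∉ inUnion G a b S := fun s hs h => inUnion_not_mem h hs
  have hxS : x ∉ S := inUnion_not_mem hxH
  obtain ⟨D, hD, hS'D, hBD⟩ := bottleneck_side hS' hSk (fun h => hxS (h hxS'))
  have hDin : InB G a b S D := inUnion_of_comp hxH hD (hS'D x hxS' hxS)
  have hDH : ∀ v ∈ D, v ∈ inUnion G a b S := fun v hv => ⟨D, hDin, hv⟩
  -- An `S'`-branch containing `s ∈ S` cannot be an in-branch, since `s` starts before `x`.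
  have hbad : ∀ C s, s ∈ C → s ∈ S → ¬ InB G a b S' C := by
    intro C s hsC hs hC
    have h1 := (hC.2 s hsC x hxS').1
    have h2 := (inUnion_bounds hxH hs).1
    exact hxS ((hL.inj (le_antisymm h1 h2)) ▸ hs)
  have hin : ∀ C, InB G (gather (inUnion G a b S) t N a) (gather (inUnion G a b S) t N b) S' C ↔
      InB G a b S' C := by
    intro C
    by_cases hm : ∃ s ∈ C, s ∈ S
    · obtain ⟨s, hsC, hs⟩ := hm
      refine iff_of_false (fun hC => ?_) (hbad C s hsC hs)
      have h1 := (hC.2 s hsC x hxS').1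
      exact absurd (gather_before (y := a) (hSH s hs) hxH (ht.bounds hs).1 htN) (not_lt.2 h1)
    · push Not at hm
      refine and_congr_right fun hB => ?_
      have hCD := hBD C hB hm
      refine forall₂_congr fun v hv => forall₂_congr fun s' hs' => ?_
      by_cases hs : s' ∈ S
      · refine iff_of_true ?_ (hDin.2 v (hCD hv) s' hs)
        exact ⟨(gather_before (hSH s' hs) (hDH v (hCD hv)) (ht.bounds hs).1 htN).le,
          (gather_after (hSH s' hs) (hDH v (hCD hv)) (ht.bounds hs).2 (hN v)).le⟩
      · rw [gather_le_in (hDH s' (hS'D s' hs' hs)) (hDH v (hCD hv)),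
          gather_le_in (hDH v (hCD hv)) (hDH s' (hS'D s' hs' hs))]
  have hsub : ∀ h ∈ inUnion G a b S', h ∈ inUnion G a b S := by
    rintro h ⟨C, hC, hh⟩
    exact hDH h (hBD C hC.1 (fun s hsC hs => hbad C s hsC hs hC) hh)
  unfold Str
  rw [inUnion_congr hin]
  intro v hvS' hv h₁ hh₁ h₂ hh₂
  by_cases hvH : v ∈ inUnion G a b S
  · have := hStr v hvS' hv h₁ hh₁ h₂ hh₂
    have g₁ := hsub h₁ hh₁
    have g₂ := hsub h₂ hh₂
    rwa [gather_lt_in g₁ hvH, gather_lt_in hvH g₂, gather_lt_in g₁ hvH, gather_lt_in hvH g₂]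
  · exact ⟨gather_not_between hN htN hvH (hsub h₁ hh₁) (hsub h₂ hh₂),
      gather_not_between hN htN hvH (hsub h₁ hh₁) (hsub h₂ hh₂)⟩

lemma inB_gather_of_disjoint (hS'H : ∀ s ∈ S', s ∉ inUnion G a b S) {C : Set V}
    (hC : ∀ v ∈ C, v ∉ inUnion G a b S) :
    InB G (gather (inUnion G a b S) t N a) (gather (inUnion G a b S) t N b) S' C ↔
      InB G a b S' C := by
  refine and_congr_right fun _ => forall₂_congr fun v hv => forall₂_congr fun s hs => ?_
  rw [gather_le_out (hS'H s hs) (hC v hv), gather_le_out (hC v hv) (hS'H s hs)]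

/-- If no in-branch of `S'` meets an in-branch of `S`, then gathering at the starting time
of an in-branch vertex `h₀` of `S` keeps `S'`-structuredness: by structuredness, `h₀` does not
start while the in-branches of `S'` are processed, so the window is inserted elsewhere. -/
lemma str_gather_of_disjoint (hL : Layout G I w a b) {h₀ : V} (hh₀ : h₀ ∈ inUnion G a b S)
    (hN : ∀ v, b v < N) (hS'H : ∀ s ∈ S', s ∉ inUnion G a b S)
    (hdisj : ∀ v ∈ inUnion G a b S', v ∉ inUnion G a b S)
    (hin : ∀ C, InB G (gather (inUnion G a b S) (a h₀) N a)
      (gather (inUnion G a b S) (a h₀) N b) S' C ↔ InB G a b S' C)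
    (hStr : Str G a b S') :
    Str G (gather (inUnion G a b S) (a h₀) N a) (gather (inUnion G a b S) (a h₀) N b) S' := by
  have htN : a h₀ < N := (hL.lt h₀).trans (hN h₀)
  unfold Str
  rw [inUnion_congr hin]
  intro v hvS' hv h₁ hh₁ h₂ hh₂
  have g₁ := hdisj h₁ hh₁
  have g₂ := hdisj h₂ hh₂
  by_cases hvH : v ∈ inUnion G a b S
  · have key : ∀ x : V → ℕ, (∀ u, x u < N) →
        ¬ (gather (inUnion G a b S) (a h₀) N a h₁ < gather (inUnion G a b S) (a h₀) N x v ∧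
          gather (inUnion G a b S) (a h₀) N x v < gather (inUnion G a b S) (a h₀) N b h₂) := by
      rintro x hx ⟨h1, h2⟩
      have e1 : a h₁ ≤ a h₀ := by
        by_contra hc
        exact absurd (gather_after g₁ hvH (not_le.1 hc) (hx v)) (by omega)
      have e2 : a h₀ < b h₂ := by
        by_contra hc
        exact absurd (gather_before (y := x) g₂ hvH (not_lt.1 hc) htN) (by omega)
      have e3 : a h₁ ≠ a h₀ := fun h => g₁ (hL.inj h ▸ hh₀)
      exact (hStr h₀ (fun h => hS'H h₀ h hh₀) (fun h => hdisj h₀ h hh₀) h₁ hh₁ h₂ hh₂).1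
        ⟨lt_of_le_of_ne e1 e3, e2⟩
    exact ⟨key a fun u => (hL.lt u).trans (hN u), key b hN⟩
  · have := hStr v hvS' hv h₁ hh₁ h₂ hh₂
    rwa [gather_lt_out g₁ hvH, gather_lt_out hvH g₂, gather_lt_out g₁ hvH, gather_lt_out hvH g₂]

/-- Gathering the in-branches of `S` at the starting time of one of their vertices keeps
`S'`-structuredness for every other bottleneck `S'`. -/
lemma str_gather_other [Finite V] (hL : Layout G I w a b) (hwk : w ≤ k) {h₀ : V}
    (hh₀ : h₀ ∈ inUnion G a b S) (hN : ∀ v, b v < N) (hS : IsBottleneck G k S)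
    (hS' : IsBottleneck G k S') (hne : S ≠ S') (hStr : Str G a b S') :
    Str G (gather (inUnion G a b S) (a h₀) N a) (gather (inUnion G a b S) (a h₀) N b) S' := by
  have ht : Within G a b S (a h₀) := ⟨h₀, hh₀, h₀, hh₀, le_rfl, hL.lt h₀⟩
  have htN := ht.lt_bound hN
  have hSH : ∀ s ∈ S, s ∉ inUnion G a b S := fun s hs h => inUnion_not_mem h hs
  by_cases hmeet : ∃ x ∈ S', x ∈ inUnion G a b S
  · obtain ⟨x, hxS', hxH⟩ := hmeet
    exact str_gather_of_meets hL ht hN (bottleneck_ncard_le hL hwk hS) hS' hxS' hxH hStr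
  push Not at hmeet
  by_cases hsub : S ⊆ S'
  · -- All `S'`-branches lie in one component of `G - S`, which is not an in-branch of `S`.
    have hnot : ¬ S' ⊆ S := fun h => hne (hsub.antisymm h)
    obtain ⟨D, hD, hS'D, hBD⟩ := bottleneck_side hS' (bottleneck_ncard_le hL hwk hS) hnot
    obtain ⟨s', hs', hs'S⟩ := Set.not_subset.1 hnot
    have hDH : ∀ v ∈ D, v ∉ inUnion G a b S := fun v hv hvH =>
      hmeet s' hs' ⟨D, inUnion_of_comp hvH hD hv, hS'D s' hs' hs'S⟩
    have hCH : ∀ C, IsBranch G S' C → ∀ v ∈ C, v ∉ inUnion G a b S := fun C hC v hv =>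
      hDH v (hBD C hC (fun y hy hyS => hC.not_mem hy (hsub hyS)) hv)
    refine str_gather_of_disjoint hL hh₀ hN hmeet ?_ ?_ hStr
    · rintro v ⟨C, hC, hv⟩
      exact hCH C hC.1 v hv
    · intro C
      by_cases hC : IsBranch G S' C
      · exact inB_gather_of_disjoint hmeet (hCH C hC)
      · exact iff_of_false (fun h => hC h.1) (fun h => hC h.1)
  · -- All in-branches of `S` lie in the component `D` of `G - S'` that contains `S \ S'`.
    obtain ⟨D, hD, hSD, hBD⟩ := bottleneck_side hS (bottleneck_ncard_le hL hwk hS') hsub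
    obtain ⟨s, hs, hsS'⟩ := Set.not_subset.1 hsub
    have hsD := hSD s hs hsS'
    have hHD : ∀ v ∈ inUnion G a b S, v ∈ D := by
      rintro v ⟨C, hC, hv⟩
      exact hBD C hC.1 (fun y hy hyS' => hmeet y hyS' ⟨C, hC, hy⟩) hv
    have hDiff : InB G (gather (inUnion G a b S) (a h₀) N a)
        (gather (inUnion G a b S) (a h₀) N b) S' D ↔ InB G a b S' D := by
      refine and_congr_right fun hB => ⟨fun h v hv s' hs' => ?_, fun h v hv s' hs' => ?_⟩
      · by_cases hvH : v ∈ inUnion G a b S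
        · have h1 := h s hsD s' hs'
          rw [gather_le_out (hmeet s' hs') (hSH s hs),
            gather_le_out (hSH s hs) (hmeet s' hs')] at h1
          have h2 := inUnion_bounds hvH hs
          omega
        · have h1 := h v hv s' hs'
          rwa [gather_le_out (hmeet s' hs') hvH, gather_le_out hvH (hmeet s' hs')] at h1
      · by_cases hvH : v ∈ inUnion G a b S
        · have h1 := h s hsD s' hs'
          rw [← gather_le_out (hmeet s' hs') (hSH s hs) (t := a h₀) (N := N),
            ← gather_le_out (hSH s hs) (hmeet s' hs') (t := a h₀) (N := N)] at h1
          exact ⟨h1.1.trans (gather_before (hSH s hs) hvH (ht.bounds hs).1 htN).le,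
            (gather_after (hSH s hs) hvH (ht.bounds hs).2 (hN v)).le.trans h1.2⟩
        · rw [gather_le_out (hmeet s' hs') hvH, gather_le_out hvH (hmeet s' hs')]
          exact h v hv s' hs'
    have hin : ∀ C, InB G (gather (inUnion G a b S) (a h₀) N a)
        (gather (inUnion G a b S) (a h₀) N b) S' C ↔ InB G a b S' C := by
      intro C
      by_cases hB : IsBranch G S' C
      · by_cases hm : ∃ v ∈ C, v ∈ inUnion G a b S
        · obtain ⟨v, hvC, hvH⟩ := hm
          rw [comp_eq hB.1 hD hvC (hHD v hvH)]
          exact hDiff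
        · push Not at hm
          exact inB_gather_of_disjoint hmeet hm
      · exact iff_of_false (fun h => hB h.1) (fun h => hB h.1)
    by_cases hDin : InB G a b S' D
    · -- The events of in-branches of `S` lie between those of `s`, which belongs to the
      -- in-branch `D` of `S'`.
      have hsU : s ∈ inUnion G a b S' := ⟨D, hDin, hsD⟩
      unfold Str
      rw [inUnion_congr hin]
      intro v hvS' hv h₁ hh₁ h₂ hh₂
      have hvH : v ∉ inUnion G a b S := fun h => hv ⟨D, hDin, hHD v h⟩
      have hw₁ : ∃ g ∈ inUnion G a b S', g ∉ inUnion G a b S ∧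
          gather (inUnion G a b S) (a h₀) N a g ≤ gather (inUnion G a b S) (a h₀) N a h₁ := by
        by_cases h : h₁ ∈ inUnion G a b S
        · exact ⟨s, hsU, hSH s hs, (gather_before (hSH s hs) h (ht.bounds hs).1 htN).le⟩
        · exact ⟨h₁, hh₁, h, le_rfl⟩
      have hw₂ : ∃ g ∈ inUnion G a b S', g ∉ inUnion G a b S ∧
          gather (inUnion G a b S) (a h₀) N b h₂ ≤ gather (inUnion G a b S) (a h₀) N b g := by
        by_cases h : h₂ ∈ inUnion G a b S
        · exact ⟨s, hsU, hSH s hs, (gather_after (hSH s hs) h (ht.bounds hs).2 (hN _)).le⟩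
        · exact ⟨h₂, hh₂, h, le_rfl⟩
      obtain ⟨g₁, hg₁, hg₁H, hle₁⟩ := hw₁
      obtain ⟨g₂, hg₂, hg₂H, hle₂⟩ := hw₂
      have := hStr v hvS' hv g₁ hg₁ g₂ hg₂
      exact ⟨fun h => this.1 ⟨(gather_lt_out hg₁H hvH).1 (hle₁.trans_lt h.1),
          (gather_lt_out hvH hg₂H).1 (h.2.trans_le hle₂)⟩,
        fun h => this.2 ⟨(gather_lt_out hg₁H hvH).1 (hle₁.trans_lt h.1),
          (gather_lt_out hvH hg₂H).1 (h.2.trans_le hle₂)⟩⟩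
    · refine str_gather_of_disjoint hL hh₀ hN hmeet ?_ hin hStr
      rintro v ⟨C, hC, hv⟩ hvH
      exact hDin (comp_eq hC.1.1 hD hv (hHD v hvH) ▸ hC)

end gatherStr

/-! ### An extremal layout is structured -/

/-- The sum, over all vertices, of the size of the bag in which the vertex starts. -/
noncomputable def startCost [Fintype V] (a b : V → ℕ) : ℕ := ∑ v, (bag a b (a v)).ncard

/-- The number of bottlenecks for which the layout is not structured. -/
noncomputable def badCount (G : SimpleGraph V) (k : ℕ) (a b : V → ℕ) : ℕ :=
  {S : Set V | IsBottleneck G k S ∧ ¬ Str G a b S}.ncard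

lemma startCost_gather_le [Fintype V] {G : SimpleGraph V} {I S : Set V} {w t N : ℕ}
    {a b : V → ℕ} (hL : Layout G I w a b) (ht : Within G a b S t) (hN : ∀ v, b v < N)
    (hmin : ∀ τ, Within G a b S τ →
      (bag a b t \ inUnion G a b S).ncard ≤ (bag a b τ \ inUnion G a b S).ncard) (v : V) :
    (bag (gather (inUnion G a b S) t N a) (gather (inUnion G a b S) t N b)
      (gather (inUnion G a b S) t N a v)).ncard ≤ (bag a b (a v)).ncard := by
  by_cases hv : v ∈ inUnion G a b S
  · have h1 := ncard_gather_start_in hL ht hN hv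
    have h2 := hmin (a v) ⟨v, hv, v, hv, le_rfl, hL.lt v⟩
    have h3 := ncard_split (bag a b (a v)) (inUnion G a b S)
    omega
  · exact ncard_gather_start_out hL ht hN hv

lemma exists_structured_layout [Fintype V] {G : SimpleGraph V} {I : Set V} {w k : ℕ}
    (hwk : w ≤ k) {a b : V → ℕ} (hL : Layout G I w a b) :
    ∃ a' b', Layout G I w a' b' ∧ ∀ S, IsBottleneck G k S → Str G a' b' S := by
  obtain ⟨⟨a, b⟩, hL : Layout G I w a b, hopt⟩ := WellFounded.has_min
    (InvImage.wf (fun p : (V → ℕ) × (V → ℕ) => toLex (startCost p.1 p.2, badCount G k p.1 p.2))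
      (wellFounded_lt)) {p | Layout G I w p.1 p.2} ⟨(a, b), hL⟩
  refine ⟨a, b, hL, ?_⟩
  by_contra! hbad
  obtain ⟨S, hS, hnS⟩ := hbad
  obtain ⟨h₀, hh₀⟩ := inUnion_nonempty hL hwk hS
  have ht₀ : Within G a b S (a h₀) := ⟨h₀, hh₀, h₀, hh₀, le_rfl, hL.lt h₀⟩
  obtain ⟨N, hN⟩ : ∃ N, ∀ v, b v < N := by
    obtain ⟨M, hM⟩ := (Set.finite_range b).bddAbove
    exact ⟨M + 1, fun v => Nat.lt_succ_of_le (hM ⟨v, rfl⟩)⟩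
  have hcost : ∀ a' b', Layout G I w a' b' → startCost a b ≤ startCost a' b' := by
    intro a' b' h
    by_contra hlt
    exact hopt (a', b') h (Prod.Lex.toLex_lt_toLex.2 (Or.inl (not_le.1 hlt)))
  obtain ⟨t, ht : Within G a b S t, hmin'⟩ := WellFounded.has_min
    (measure fun τ => (bag a b τ \ inUnion G a b S).ncard).wf {τ | Within G a b S τ} ⟨_, ht₀⟩
  have hmin : ∀ τ, Within G a b S τ →
      (bag a b t \ inUnion G a b S).ncard ≤ (bag a b τ \ inUnion G a b S).ncard :=
    fun τ hτ => not_lt.1 (hmin' τ hτ)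
  -- Gathering at an optimal time `t` cannot lower the cost, so the time `a h₀` is optimal too.
  have heq := (Finset.sum_eq_sum_iff_of_le
    fun v (_ : v ∈ Finset.univ) => startCost_gather_le hL ht hN hmin v).1
    (le_antisymm (Finset.sum_le_sum fun v _ => startCost_gather_le hL ht hN hmin v)
      (hcost _ _ (gather_layout hL ht hN hmin))) h₀ (Finset.mem_univ _)
  have hmin₀ : ∀ τ, Within G a b S τ →
      (bag a b (a h₀) \ inUnion G a b S).ncard ≤ (bag a b τ \ inUnion G a b S).ncard := by
    intro τ hτ
    have h1 := ncard_gather_start_in hL ht hN hh₀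
    have h2 := ncard_split (bag a b (a h₀)) (inUnion G a b S)
    have h3 := hmin τ hτ
    omega
  -- Gathering at `a h₀` then keeps the cost and repairs `S` without damaging other bottlenecks.
  have hL₀ := gather_layout hL ht₀ hN hmin₀
  have hle : startCost (gather (inUnion G a b S) (a h₀) N a)
      (gather (inUnion G a b S) (a h₀) N b) ≤ startCost a b :=
    Finset.sum_le_sum fun v _ => startCost_gather_le hL ht₀ hN hmin₀ v
  refine hopt (_, _) hL₀ (Prod.Lex.toLex_lt_toLex.2 (Or.inr ⟨le_antisymm hle (hcost _ _ hL₀), ?_⟩))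
  refine Set.ncard_lt_ncard ⟨?_, ?_⟩ (Set.toFinite _)
  · rintro S' ⟨hS', hn⟩
    refine ⟨hS', fun hStr => hn ?_⟩
    rcases eq_or_ne S S' with rfl | hne
    · exact str_gather_self ht₀ hN
    · exact str_gather_other hL hwk hh₀ hN hS hS' hne hStr
  · intro h
    exact (h ⟨hS, hnS⟩).2 (str_gather_self ht₀ hN)

/-! ### From path decompositions to layouts -/

/-- A path decomposition with bags of size at most `w` refines to a layout: vertices entering the
same bag are introduced one by one, in order of their distance to `I` inside the prefix. -/
lemma exists_layout [Fintype V] {G : SimpleGraph V} {I : Set V} {l w : ℕ} {X : ℕ → Set V}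
    (hP : IsPathDecomp G l X) (hIc : IsIConn G l X I) (hw : ∀ i < l, (X i).ncard ≤ w) :
    ∃ a b, Layout G I w a b := by
  classical
  obtain ⟨hcov, hedge, hconv⟩ := hP
  -- `A v` is the first bag containing `v`, and `B v - 1` the last one.
  have hAB : ∀ v, ∃ A B : ℕ, A < B ∧ ∀ i, (A ≤ i ∧ i < B) ↔ (i < l ∧ v ∈ X i) := by
    intro v
    have hne : {i | i < l ∧ v ∈ X i}.Nonempty := hcov v
    have hbdd : BddAbove {i | i < l ∧ v ∈ X i} := ⟨l, fun i hi => hi.1.le⟩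
    have h1 := Nat.sInf_mem hne
    have h2 := Nat.sSup_mem hne hbdd
    refine ⟨sInf {i | i < l ∧ v ∈ X i}, sSup {i | i < l ∧ v ∈ X i} + 1,
      Nat.lt_succ_of_le (le_csSup hbdd h1), fun i => ⟨fun hi => ?_, fun hi => ?_⟩⟩
    · have hi2 : i ≤ sSup {i | i < l ∧ v ∈ X i} := by omega
      exact ⟨hi2.trans_lt h2.1, hconv _ i _ hi.1 hi2 h2.1 ⟨h1.2, h2.2⟩⟩
    · exact ⟨Nat.sInf_le hi, Nat.lt_succ_of_le (le_csSup hbdd hi)⟩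
  choose A B hlt hmem using hAB
  have hAl : ∀ v, A v < l ∧ v ∈ X (A v) := fun v => (hmem v (A v)).1 ⟨le_rfl, hlt v⟩
  have hpre : ∀ i < l, ∀ v, v ∈ {v | ∃ j ≤ i, v ∈ X j} ↔ A v ≤ i := by
    intro i hi v
    constructor
    · rintro ⟨j, hj, hv⟩
      exact ((hmem v j).2 ⟨by omega, hv⟩).1.trans hj
    · intro h
      exact ⟨A v, h, (hAl v).2⟩
  -- `d v` is the length of a shortest walk from `v` to `I` in the prefix in which `v` appears.
  have hd : ∀ v, ∃ d : ℕ, (∃ w ∈ I, ∃ p : G.Walk v w, (∀ x ∈ p.support, A x ≤ A v) ∧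
      p.length = d) ∧ ∀ w ∈ I, ∀ p : G.Walk v w, (∀ x ∈ p.support, A x ≤ A v) → d ≤ p.length := by
    intro v
    have hex : ∃ d : ℕ, ∃ w ∈ I, ∃ p : G.Walk v w, (∀ x ∈ p.support, A x ≤ A v) ∧
        p.length = d := by
      obtain ⟨w, ⟨p, hp⟩, hwI⟩ := hIc (A v) (hAl v).1 _
        (isCompIn_walks G _ ((hpre _ (hAl v).1 v).2 le_rfl))
      exact ⟨_, w, hwI, p, fun x hx => (hpre _ (hAl v).1 x).1 (hp x hx), rfl⟩
    exact ⟨Nat.find hex, Nat.find_spec hex, fun w hw p hp => Nat.find_min' hex ⟨w, hw, p, hp, rfl⟩⟩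
  choose d hd1 hd2 using hd
  have hstep : ∀ v, v ∉ I → ∃ u, G.Adj v u ∧ (A u < A v ∨ (A u = A v ∧ d u < d v)) := by
    intro v hv
    obtain ⟨w, hw, p, hp, hlen⟩ := hd1 v
    cases p with
    | nil => exact absurd hw hv
    | @cons _ u _ h q =>
      refine ⟨u, h, ?_⟩
      have hu : A u ≤ A v := hp u (by simp)
      rcases hu.lt_or_eq with hu | hu
      · exact Or.inl hu
      · refine Or.inr ⟨hu, ?_⟩
        have h1 := hd2 u w hw q (fun x hx => hu ▸ hp x (by simp [hx]))
        rw [Walk.length_cons] at hlen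
        omega
  obtain ⟨D, hD⟩ : ∃ D, ∀ v, d v < D := by
    obtain ⟨M, hM⟩ := (Set.finite_range d).bddAbove
    exact ⟨M + 1, fun v => Nat.lt_succ_of_le (hM ⟨v, rfl⟩)⟩
  have hlex : ∀ {x y r r' m : ℕ}, x < y → r < m → x * m + r < y * m + r' := by
    intro x y r r' m hxy hr
    have := Nat.mul_le_mul_right m hxy
    rw [Nat.succ_mul] at this
    omega
  set n := Fintype.card V with hn
  let e : V ≃ Fin n := Fintype.equivFin V
  refine ⟨fun v => (A v * D + d v) * n + e v, fun v => (B v * D) * n, ?_, ?_, ?_, ?_, ?_⟩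
  · intro u v huv
    have h := congrArg (· % n) huv
    simp only [Nat.mul_add_mod_self_right, Nat.mod_eq_of_lt (e _).2] at h
    exact e.injective (Fin.ext h)
  · intro v
    have := hlex (r' := 0) (hlex (r' := 0) (hlt v) (hD v)) (e v).2
    simpa using this
  · intro u v huv
    obtain ⟨i, hi, hui, hvi⟩ := hedge u v huv
    have h1 := ((hmem u i).2 ⟨hi, hui⟩).1
    have h2 := ((hmem v i).2 ⟨hi, hvi⟩).2
    have := hlex (r' := 0) (hlex (r' := 0) (h1.trans_lt h2) (hD u)) (e u).2
    simpa using this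
  · intro v hv
    obtain ⟨u, huv, h | ⟨h, h'⟩⟩ := hstep v hv
    · exact ⟨u, huv, hlex (hlex h (hD u)) (e u).2⟩
    · refine ⟨u, huv, hlex ?_ (e u).2⟩
      rw [h]
      omega
  · intro t
    have hin : ∀ v, v ∈ bag (fun v => (A v * D + d v) * n + e v) (fun v => (B v * D) * n) t →
        t / (D * n) < l ∧ v ∈ X (t / (D * n)) := by
      rintro v ⟨h1, h2⟩
      simp only at h1 h2
      have hpos : 0 < D * n := Nat.mul_pos ((Nat.zero_le _).trans_lt (hD v))
        ((Nat.zero_le _).trans_lt (e v).2)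
      refine (hmem v _).1 ⟨(Nat.le_div_iff_mul_le hpos).2 ?_, (Nat.div_lt_iff_lt_mul hpos).2 ?_⟩
      · calc A v * (D * n) = A v * D * n := (mul_assoc _ _ _).symm
          _ ≤ (A v * D + d v) * n := Nat.mul_le_mul_right _ (Nat.le_add_right _ _)
          _ ≤ t := by omega
      · rwa [← mul_assoc]
    rcases Set.eq_empty_or_nonempty
      (bag (fun v => (A v * D + d v) * n + e v) (fun v => (B v * D) * n) t) with h0 | ⟨v, hv⟩
    · rw [h0]; simp
    · exact (Set.ncard_le_ncard (fun u hu => (hin u hu).2) (Set.toFinite _)).trans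
        (hw _ (hin v hv).1)

/-! ### From layouts to path decompositions -/

section toDecomp
variable {G : SimpleGraph V} {I S C : Set V} {w k l : ℕ} {a b : V → ℕ}

lemma Layout.isPathDecomp (hL : Layout G I w a b) (hl : ∀ v, b v < l) :
    IsPathDecomp G l (bag a b) := by
  refine ⟨fun v => ⟨a v, (hL.lt v).trans (hl v), le_rfl, hL.lt v⟩, ?_, ?_⟩
  · intro u v huv
    have h1 := hL.adj u v huv
    have h2 := hL.adj v u huv.symm
    have h3 := hL.lt u
    have h4 := hL.lt v
    have h5 := hl u
    have h6 := hl v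
    refine ⟨max (a u) (a v), by omega, ⟨?_, ?_⟩, ⟨?_, ?_⟩⟩ <;> omega
  · rintro i j m hij hjm - v ⟨h1, h2⟩
    exact ⟨h1.1.trans hij, hjm.trans_lt h2.2⟩

/-- In each component of a prefix, the vertex starting first belongs to `I`. -/
lemma Layout.isIConn [Finite V] (hL : Layout G I w a b) : IsIConn G l (bag a b) I := by
  intro i _ C hC
  obtain ⟨v, hv, hmin⟩ := Set.exists_min_image C a (Set.toFinite _) hC.1
  refine ⟨v, hv, ?_⟩
  by_contra hvI
  obtain ⟨u, huv, hlt⟩ := hL.conn v hvI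
  obtain ⟨j, hj, hvj⟩ := hC.2.1 hv
  have := hmin u (hC.2.2.2 v hv u ⟨a u, by have := hvj.1; omega, le_rfl, hL.lt u⟩ huv)
  omega

lemma Layout.firstIdx_spec (hL : Layout G I w a b) (hl : ∀ v, b v < l) (hC : C.Nonempty) :
    (∃ v ∈ C, a v = firstIdx l (bag a b) C) ∧ ∀ v ∈ C, firstIdx l (bag a b) C ≤ a v := by
  have hle : ∀ v ∈ C, firstIdx l (bag a b) C ≤ a v := fun v hv =>
    Nat.sInf_le ⟨(hL.lt v).trans (hl v), v, hv, le_rfl, hL.lt v⟩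
  obtain ⟨x, hx⟩ := hC
  have hne : (supp l (bag a b) C).Nonempty :=
    ⟨a x, (hL.lt x).trans (hl x), x, hx, le_rfl, hL.lt x⟩
  obtain ⟨-, v, hv, h1, -⟩ := Nat.sInf_mem hne
  exact ⟨⟨v, hv, le_antisymm h1 (hle v hv)⟩, hle⟩

lemma Layout.lastIdx_spec (hL : Layout G I w a b) (hl : ∀ v, b v < l) (hC : C.Nonempty) :
    (∃ v ∈ C, b v = lastIdx l (bag a b) C + 1) ∧ ∀ v ∈ C, b v ≤ lastIdx l (bag a b) C + 1 := by
  have hbdd : BddAbove (supp l (bag a b) C) := ⟨l, fun i hi => hi.1.le⟩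
  have hmem : ∀ v ∈ C, b v - 1 ∈ supp l (bag a b) C := by
    intro v hv
    have h1 := hL.lt v
    have h2 := hl v
    exact ⟨by omega, v, hv, by omega, by omega⟩
  have hle : ∀ v ∈ C, b v ≤ lastIdx l (bag a b) C + 1 := by
    intro v hv
    have : b v - 1 ≤ lastIdx l (bag a b) C := le_csSup hbdd (hmem v hv)
    omega
  obtain ⟨x, hx⟩ := hC
  obtain ⟨-, v, hv, -, h1⟩ := Nat.sSup_mem ⟨_, hmem x hx⟩ hbdd
  exact ⟨⟨v, hv, le_antisymm (hle v hv) h1⟩, hle⟩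

lemma Layout.isInBranch_iff (hL : Layout G I w a b) (hl : ∀ v, b v < l) :
    IsInBranch G l (bag a b) S C ↔ InB G a b S C := by
  refine and_congr_right fun hB => ?_
  obtain ⟨⟨v₁, hv₁, e₁⟩, hf⟩ := hL.firstIdx_spec hl hB.1.1
  obtain ⟨⟨v₂, hv₂, e₂⟩, hg⟩ := hL.lastIdx_spec hl hB.1.1
  constructor
  · rintro ⟨h1, h2⟩ v hv s hs
    exact ⟨(h1 hs).1.trans (hf v hv), (hg v hv).trans (h2 hs).2⟩
  · intro h
    refine ⟨fun s hs => ?_, fun s hs => ?_⟩ <;>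
    · have h1 := h v₁ hv₁ s hs
      have h2 := h v₂ hv₂ s hs
      have h3 := hL.lt v₁
      have h4 := hL.lt v₂
      have h5 := hf v₂ hv₂
      exact ⟨by omega, by omega⟩

lemma Layout.isStructured [Finite V] (hL : Layout G I w a b) (hl : ∀ v, b v < l) (hwk : w ≤ k)
    (hS : IsBottleneck G k S) (hStr : Str G a b S) : IsStructured G l (bag a b) S := by
  intro C hC
  have hCcomp : IsCompOf G S C := by
    rcases hC with h | h | h
    exacts [h.1, h.1.1, h.1.1]
  have hCin : ¬ InB G a b S C := by
    rw [← hL.isInBranch_iff hl]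
    rcases hC with h | h | h
    exacts [fun h' => h.2 h'.1, h.2.1, h.2.1]
  obtain ⟨C₀, hC₀⟩ := exists_inB hL hwk hS
  have hC₀' := (hL.isInBranch_iff hl).2 hC₀
  obtain ⟨C₁, hC₁, e₁⟩ := Nat.sInf_mem
    (s := {i | ∃ C, IsInBranch G l (bag a b) S C ∧ i = firstIdx l (bag a b) C}) ⟨_, C₀, hC₀', rfl⟩
  obtain ⟨C₂, hC₂, e₂⟩ := Nat.sSup_mem
    (s := {i | ∃ C, IsInBranch G l (bag a b) S C ∧ i = lastIdx l (bag a b) C}) ⟨_, C₀, hC₀', rfl⟩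
    (((Set.toFinite {C | IsInBranch G l (bag a b) S C}).image (lastIdx l (bag a b))).subset
      (by rintro i ⟨C, hC, rfl⟩; exact ⟨C, hC, rfl⟩)).bddAbove
  obtain ⟨h₁, hh₁, f₁⟩ := (hL.firstIdx_spec hl hC₁.1.1.1).1
  obtain ⟨h₂, hh₂, f₂⟩ := (hL.lastIdx_spec hl hC₂.1.1.1).1
  have g₁ : botStart G l (bag a b) S = a h₁ := e₁.trans f₁.symm
  have g₂ : botEnd G l (bag a b) S + 1 = b h₂ := by rw [f₂, ← e₂]; rfl
  intro t ht₁ ht₂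
  ext v
  refine and_congr_right fun hv => ?_
  have key := hStr v (hCcomp.2.1 hv) (fun h => hCin (inUnion_of_comp h hCcomp hv))
    h₁ ⟨C₁, (hL.isInBranch_iff hl).1 hC₁, hh₁⟩ h₂ ⟨C₂, (hL.isInBranch_iff hl).1 hC₂, hh₂⟩
  have := hL.lt v
  rw [mem_bag, mem_bag]
  omega

end toDecomp

/-- if `G` has an `I`-connected path decomposition of width at most
`k-1`, then it has one of no larger width that is `S`-structured for every
bottleneck `S`. -/
theorem stmt9 [Fintype V] (k : ℕ) (hk : 1 ≤ k) (G : SimpleGraph V) (I : Set V)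
    (l : ℕ) (X : ℕ → Set V) (hP : IsPathDecomp G l X) (hIc : IsIConn G l X I)
    (hw : pdWidth l X ≤ k - 1) :
    ∃ (l' : ℕ) (X' : ℕ → Set V),
      IsPathDecomp G l' X' ∧ IsIConn G l' X' I ∧
      pdWidth l' X' ≤ pdWidth l X ∧
      ∀ S : Set V, IsBottleneck G k S → IsStructured G l' X' S := by
  have hsup : ∀ i < l, (X i).ncard ≤ pdWidth l X + 1 := by
    intro i hi
    have := Finset.le_sup (f := fun i => (X i).ncard) (Finset.mem_range.2 hi)
    unfold pdWidth
    omega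
  obtain ⟨a₀, b₀, hL₀⟩ := exists_layout hP hIc hsup
  have hwk : pdWidth l X + 1 ≤ k := by omega
  obtain ⟨a, b, hL, hStr⟩ := exists_structured_layout hwk hL₀
  obtain ⟨l', hl'⟩ : ∃ l', ∀ v, b v < l' := by
    obtain ⟨M, hM⟩ := (Set.finite_range b).bddAbove
    exact ⟨M + 1, fun v => Nat.lt_succ_of_le (hM ⟨v, rfl⟩)⟩
  refine ⟨l', bag a b, hL.isPathDecomp hl', hL.isIConn, ?_,
    fun S hS => hL.isStructured hl' hwk hS (hStr S hS)⟩
  have : ((Finset.range l').sup fun i => (bag a b i).ncard) ≤ pdWidth l X + 1 :=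
    Finset.sup_le fun i _ => hL.width i
  exact Nat.sub_le_iff_le_add.2 this
end
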